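/- (Journé's Lemma in the plane.) For all $\epsilon > 0$ there is a constant $C_\epsilon$ with the following property. Let $\mathcal{U}$ be a collection of dyadic rectangles in $\mathbb{R}^2$ whose union $\operatorname{sh}(\mathcal{U})$ has finite measure, and set $V = \{M\mathbf{1}_{\operatorname{sh}(\mathcal{U})} > 1/2\}$ where $M$ is the strong maximal function. For $R = R_{(1)} \times R_{(2)} \in \mathcal{U}$ define $\operatorname{emb}(R;\mathcal{U}) = \sup\{\mu \ge 1 : (\mu R_{(1)}) \times R_{(2)} \subset V\}$. Then for every subcollection $\mathcal{U}' \subset \mathcal{U}$ of pairwise incomparable dyadic rectangles, $\sum_{R \in \mathcal{U}'} \operatorname{emb}(R;\mathcal{U})^{-\epsilon} |R| \le C_\epsilon |\operatorname{sh}(\mathcal{U}')|$. -/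

import Mathlib

open MeasureTheory Set

noncomputable section

/-- The dyadic interval `[j2^k, (j+1)2^k)`. -/
def dI (j k : ℤ) : Set ℝ := Set.Ico ((j:ℝ) * 2 ^ k) (((j:ℝ) + 1) * 2 ^ k)

/-- The concentric dilate by `μ` of the dyadic interval `[j2^k, (j+1)2^k)`. -/
def dilI (μ : ℝ) (j k : ℤ) : Set ℝ :=
  Set.Ico (((j:ℝ) + 1/2) * 2 ^ k - μ * 2 ^ k / 2) (((j:ℝ) + 1/2) * 2 ^ k + μ * 2 ^ k / 2)

/-- A dyadic rectangle in the plane, encoded by the data `((j₁,k₁),(j₂,k₂))` of its sides. -/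
abbrev Rect2 := (ℤ × ℤ) × (ℤ × ℤ)

/-- The dyadic rectangle of the plane associated to the data `R`. -/
def rect (R : Rect2) : Set (ℝ × ℝ) := dI R.1.1 R.1.2 ×ˢ dI R.2.1 R.2.2

/-- The dilate of `rect R` by `(μ, 1)`: only the first coordinate is expanded. -/
def rectDil1 (μ : ℝ) (R : Rect2) : Set (ℝ × ℝ) := dilI μ R.1.1 R.1.2 ×ˢ dI R.2.1 R.2.2

/-- The concentric dilate of `rect R` by `μ` in both coordinates. -/
def rectDil (μ : ℝ) (R : Rect2) : Set (ℝ × ℝ) := dilI μ R.1.1 R.1.2 ×ˢ dilI μ R.2.1 R.2.2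

/-- The shadow `⋃_{R ∈ 𝓤} R` of a collection of dyadic rectangles. -/
def sh (𝓤 : Set Rect2) : Set (ℝ × ℝ) := ⋃ R ∈ 𝓤, rect R

/-- The superlevel set `{M 1_S > t}` of the strong maximal function of an indicator in the
plane: points contained in some axis-parallel rectangle `Q` with `|S ∩ Q| > t|Q|`. -/
def maxGT (t : ENNReal) (S : Set (ℝ × ℝ)) : Set (ℝ × ℝ) :=
  {x | ∃ a b c d : ℝ, x ∈ Set.Ioo a b ×ˢ Set.Ioo c d ∧
    t * volume (Set.Ioo a b ×ˢ Set.Ioo c d) < volume (S ∩ Set.Ioo a b ×ˢ Set.Ioo c d)}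

/-- `emb(R; 𝓤)`: the supremum of those `μ ≥ 1` with `(μ R₍₁₎) × R₍₂₎ ⊆ {M 1_{sh 𝓤} > 1/2}`. -/
def emb (𝓤 : Set Rect2) (R : Rect2) : ℝ :=
  sSup {μ : ℝ | 1 ≤ μ ∧ rectDil1 μ R ⊆ maxGT (1/2) (sh 𝓤)}

/-!
Let `𝓡` be a family of incomparable dyadic rectangles and `R ∈ 𝓡`. Every strictly wider member of
`𝓡` meeting `R` crosses it from left to right, its vertical side lying inside `R₍₂₎`. Let `F` be the
union of these vertical sides; the uncrossed parts `R₍₁₎ × (R₍₂₎ \ F)` are pairwise disjoint as `R`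
varies. If `F` filled more than `3/4` of `R₍₂₎`, then for `I` the horizontal side of the least wide
crossing rectangle, `I × F ⊆ sh 𝓡` would occupy more than half of `(3/2) I × R₍₂₎`, so that
`(μ R₍₁₎) × R₍₂₎ ⊆ {M 1 > 1/2}` for all `μ ≤ |I| / (2|R₍₁₎|)`. Suppose that inclusion fails for
`μ = 2 ^ n` and all `R ∈ 𝓡`. Sorting the widths by their exponents modulo `n + 1` makes different
widths differ by a factor of at least `2 ^ (n + 1)`, so `|R| ≤ 4 |R₍₁₎ × (R₍₂₎ \ F)|` within each
of the `n + 1` classes, and `∑ |R| ≤ 4 (n + 1) |sh 𝓡|`. Summing over the dyadic sizes of the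
embeddedness costs a factor `∑ 2 ^ (-nε) · 4 (n + 2) < ∞`.
-/

open Filter Topology
open scoped ENNReal

/-! ### Sums and measures -/

lemma summable_linear_mul_geometric (a b : ℝ) {q : ℝ} (hq : |q| < 1) :
    Summable fun n : ℕ ↦ (a * n + b) * q ^ n := by
  refine (((summable_pow_mul_geometric_of_norm_lt_one 1 hq).mul_left a).add
    ((summable_geometric_of_abs_lt_one hq).mul_left b)).congr fun n ↦ ?_
  ring

lemma tsum_mul_toReal_le_of_tsum_ofReal_mul_le {α : Type*} {f : α → ℝ} {g : α → ℝ≥0∞} {C : ℝ}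
    {v : ℝ≥0∞} (hf : ∀ x, 0 ≤ f x) (hg : ∀ x, g x ≠ ⊤) (hC : 0 ≤ C) (hv : v ≠ ⊤)
    (h : ∑' x, ENNReal.ofReal (f x) * g x ≤ ENNReal.ofReal C * v) :
    ∑' x, f x * (g x).toReal ≤ C * v.toReal := by
  have hreal := ENNReal.toReal_mono (ENNReal.mul_ne_top ENNReal.ofReal_ne_top hv) h
  rw [ENNReal.tsum_toReal_eq fun x ↦ ENNReal.mul_ne_top ENNReal.ofReal_ne_top (hg x)] at hreal
  simpa [hf, hC] using hreal

lemma measure_le_four_mul_measure_sdiff {α : Type*} [MeasurableSpace α] {ν : Measure α}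
    {s t : Set α} (hs : ν s ≠ ⊤) (h : 4 * ν t ≤ 3 * ν s) : ν s ≤ 4 * ν (s \ t) := by
  have : 3 * ν s + ν s ≤ 3 * ν s + 4 * ν (s \ t) :=
    calc 3 * ν s + ν s = 4 * ν s := by ring
      _ ≤ 4 * (ν t + ν (s \ t)) := by
        gcongr
        exact tsub_le_iff_left.1 le_measure_sdiff
      _ = 4 * ν t + 4 * ν (s \ t) := mul_add ..
      _ ≤ 3 * ν s + 4 * ν (s \ t) := by gcongr
  exact (ENNReal.add_le_add_iff_left (ENNReal.mul_ne_top (by simp) hs)).1 this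

/-! ### Dyadic intervals and rectangles -/

lemma mem_dI_iff_floor_div_eq {j k : ℤ} {x : ℝ} : x ∈ dI j k ↔ ⌊x / 2 ^ k⌋ = j := by
  have h2k : (0 : ℝ) < 2 ^ k := by positivity
  rw [dI, mem_Ico, Int.floor_eq_iff, le_div_iff₀ h2k, div_lt_iff₀ h2k]

lemma dI_subset_dI_of_not_disjoint {j k j' k' : ℤ} (hk : k ≤ k')
    (h : ¬ Disjoint (dI j k) (dI j' k')) : dI j k ⊆ dI j' k' := by
  obtain ⟨x, hx, hx'⟩ := not_disjoint_iff.1 h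
  obtain ⟨m, rfl⟩ := Int.le.dest hk
  have floor_coarse (y : ℝ) : ⌊y / 2 ^ (k + m)⌋ = ⌊y / 2 ^ k⌋ / ((2 ^ m : ℕ) : ℤ) := by
    rw [zpow_add₀ two_ne_zero, zpow_natCast, ← div_div, ← Int.floor_div_natCast]
    norm_cast
  intro y hy
  rw [mem_dI_iff_floor_div_eq] at hx hx' hy ⊢
  rw [← hx', floor_coarse, floor_coarse, hx, hy]

lemma nonempty_dI (j k : ℤ) : (dI j k).Nonempty :=
  nonempty_Ico.2 (by gcongr; linarith)

lemma measurableSet_dI (j k : ℤ) : MeasurableSet (dI j k) := measurableSet_Ico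

lemma volume_dI (j k : ℤ) : volume (dI j k) = ENNReal.ofReal (2 ^ k) := by
  rw [dI, Real.volume_Ico]
  ring_nf

lemma volume_rect (R : Rect2) :
    volume (rect R) = volume (dI R.1.1 R.1.2) * volume (dI R.2.1 R.2.2) := by
  rw [rect, Measure.volume_eq_prod, Measure.prod_prod]

lemma volume_rect_ne_top (R : Rect2) : volume (rect R) ≠ ⊤ := by
  rw [volume_rect, volume_dI, volume_dI]
  exact ENNReal.mul_ne_top ENNReal.ofReal_ne_top ENNReal.ofReal_ne_top

lemma volume_rect_pos (R : Rect2) : 0 < volume (rect R) := by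
  rw [volume_rect, volume_dI, volume_dI]
  exact ENNReal.mul_pos (ENNReal.ofReal_pos.2 (by positivity)).ne'
    (ENNReal.ofReal_pos.2 (by positivity)).ne'

lemma rect_subset_sh {𝓡 : Set Rect2} {R : Rect2} (hR : R ∈ 𝓡) : rect R ⊆ sh 𝓡 :=
  subset_biUnion_of_mem (u := rect) hR

lemma sh_mono {𝓡 𝓢 : Set Rect2} (h : 𝓡 ⊆ 𝓢) : sh 𝓡 ⊆ sh 𝓢 :=
  biUnion_subset_biUnion_left h

lemma rect_subset_rect_of_not_disjoint {R R' : Rect2} (hwidth : R.1.2 ≤ R'.1.2)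
    (hheight : R.2.2 ≤ R'.2.2) (h : ¬ Disjoint (rect R) (rect R')) : rect R ⊆ rect R' :=
  prod_mono (dI_subset_dI_of_not_disjoint hwidth fun hd ↦ h (hd.set_prod_left _ _))
    (dI_subset_dI_of_not_disjoint hheight fun hd ↦ h (hd.set_prod_right _ _))

lemma rectDil1_one (R : Rect2) : rectDil1 1 R = rect R := by
  unfold rectDil1 rect dilI dI
  congr 2 <;> ring

/-! ### Superlevel sets of the strong maximal function -/

lemma maxGT_mono (t : ℝ≥0∞) {S S' : Set (ℝ × ℝ)} (h : S ⊆ S') : maxGT t S ⊆ maxGT t S' := by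
  rintro x ⟨a, b, c, d, hx, hlt⟩
  exact ⟨a, b, c, d, hx, hlt.trans_le (by gcongr)⟩

/- The open rectangles in `maxGT` miss the left and lower edges of the box; the strict inequality
survives enlarging the box slightly past those edges. -/
lemma Ico_prod_Ico_subset_maxGT {t : ℝ≥0∞} (ht : t ≠ ⊤) {S : Set (ℝ × ℝ)} {a b c d : ℝ}
    (h : t * volume (Ico a b ×ˢ Ico c d) < volume (S ∩ Ico a b ×ˢ Ico c d)) :
    Ico a b ×ˢ Ico c d ⊆ maxGT t S := by
  have volume_tendsto : Tendsto (fun δ : ℝ ↦ t * volume (Ioo (a - δ) b ×ˢ Ioo (c - δ) d))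
      (𝓝[>] 0) (𝓝 (t * volume (Ico a b ×ˢ Ico c d))) := by
    simp only [Measure.volume_eq_prod, Measure.prod_prod, Real.volume_Ioo, Real.volume_Ico]
    have side_tendsto (u v : ℝ) : Tendsto (fun δ : ℝ ↦ ENNReal.ofReal (v - (u - δ)))
        (𝓝[>] 0) (𝓝 (ENNReal.ofReal (v - u))) :=
      ((ENNReal.continuous_ofReal.comp (by fun_prop)).tendsto' 0 _ (by simp)).mono_left
        nhdsWithin_le_nhds
    exact ENNReal.Tendsto.const_mul (ENNReal.Tendsto.mul (side_tendsto a b)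
      (.inr ENNReal.ofReal_ne_top) (side_tendsto c d) (.inr ENNReal.ofReal_ne_top)) (.inr ht)
  obtain ⟨δ, hδ, hδpos⟩ :=
    ((volume_tendsto.eventually_lt_const h).and self_mem_nhdsWithin).exists
  have Ico_subset (u v : ℝ) : Ico u v ⊆ Ioo (u - δ) v :=
    fun x hx ↦ ⟨(sub_lt_self u hδpos).trans_le hx.1, hx.2⟩
  intro x hx
  have box_subset := prod_mono (Ico_subset a b) (Ico_subset c d)
  exact ⟨a - δ, b, c - δ, d, box_subset hx, hδ.trans_le (by gcongr)⟩

lemma rect_subset_maxGT {t : ℝ≥0∞} (ht : t < 1) {S : Set (ℝ × ℝ)} {R : Rect2} (hR : rect R ⊆ S) :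
    rect R ⊆ maxGT t S := by
  refine Ico_prod_Ico_subset_maxGT ht.ne_top ?_
  change t * volume (rect R) < volume (S ∩ rect R)
  rw [inter_eq_right.2 hR]
  simpa using ENNReal.mul_lt_mul_left (volume_rect_pos R).ne' (volume_rect_ne_top R) ht

lemma rectDil1_subset_maxGT_half {μ : ℝ} {S : Set (ℝ × ℝ)} {R : Rect2} {j k : ℤ} {F : Set ℝ}
    (hμ : 2 * μ * 2 ^ R.1.2 ≤ 2 ^ k) (hI : dI R.1.1 R.1.2 ⊆ dI j k) (hF : F ⊆ dI R.2.1 R.2.2)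
    (hS : dI j k ×ˢ F ⊆ S) (hlarge : 3 * volume (dI R.2.1 R.2.2) < 4 * volume F) :
    rectDil1 μ R ⊆ maxGT (1 / 2) S := by
  have hL : (0 : ℝ) < 2 ^ k := by positivity
  set box := Ico (j * 2 ^ k - 2 ^ k / 4 : ℝ) ((j + 1) * 2 ^ k + 2 ^ k / 4) with box_def
  have dI_subset_box : dI j k ⊆ box := Ico_subset_Ico (by linarith) (by linarith)
  have dilI_subset_box : dilI μ R.1.1 R.1.2 ⊆ box := by
    have center_mem : ((R.1.1 : ℝ) + 1 / 2) * 2 ^ R.1.2 ∈ dI j k := by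
      have : (0 : ℝ) < 2 ^ R.1.2 := by positivity
      exact hI ⟨by linarith, by linarith⟩
    exact Ico_subset_Ico (by linarith [center_mem.1]) (by linarith [center_mem.2])
  have volume_box : 2 * volume box = 3 * volume (dI j k) := by
    rw [box_def, Real.volume_Ico, volume_dI, ← ENNReal.ofReal_ofNat 2, ← ENNReal.ofReal_ofNat 3,
      ← ENNReal.ofReal_mul zero_le_two, ← ENNReal.ofReal_mul zero_le_three]
    ring_nf
  have volume_dI_pos : volume (dI j k) ≠ 0 := by simpa [volume_dI] using hL
  have more_than_half : 1 / 2 * volume (box ×ˢ dI R.2.1 R.2.2) < volume (dI j k ×ˢ F) := by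
    rw [Measure.volume_eq_prod, Measure.prod_prod, Measure.prod_prod,
      ← ENNReal.mul_lt_mul_iff_right (a := 4) (by simp) (by simp)]
    calc 4 * (1 / 2 * (volume box * volume (dI R.2.1 R.2.2)))
        = 2 * 2⁻¹ * (2 * volume box * volume (dI R.2.1 R.2.2)) := by
          rw [one_div]
          ring
      _ = volume (dI j k) * (3 * volume (dI R.2.1 R.2.2)) := by
          rw [ENNReal.mul_inv_cancel two_ne_zero (by simp), volume_box]
          ring
      _ < volume (dI j k) * (4 * volume F) :=
          (ENNReal.mul_lt_mul_iff_right volume_dI_pos (by simp [volume_dI])).2 hlarge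
      _ = 4 * (volume (dI j k) * volume F) := mul_left_comm ..
  refine (prod_mono_left dilI_subset_box).trans
    (Ico_prod_Ico_subset_maxGT (by simp) (more_than_half.trans_le (measure_mono ?_)))
  exact subset_inter hS (prod_mono dI_subset_box hF)

/-! ### The part of a rectangle left uncovered by wider ones -/

/-- The members of `𝓡` that meet `R` and whose horizontal side is strictly longer than that of `R`.
In a family of incomparable rectangles these are the ones crossing `R` horizontally. -/
def widerMeeting (𝓡 : Set Rect2) (R : Rect2) : Set Rect2 :=
  {R' ∈ 𝓡 | R.1.2 < R'.1.2 ∧ ¬ Disjoint (rect R) (rect R')}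

/-- The union of the vertical sides of the rectangles in `widerMeeting 𝓡 R`: the set of heights at
which `R` is crossed. -/
def crossedHeights (𝓡 : Set Rect2) (R : Rect2) : Set ℝ :=
  ⋃ R' ∈ widerMeeting 𝓡 R, dI R'.2.1 R'.2.2

/-- The part of `R` at heights where no wider rectangle of `𝓡` crosses it. -/
def uncrossedPart (𝓡 : Set Rect2) (R : Rect2) : Set (ℝ × ℝ) :=
  dI R.1.1 R.1.2 ×ˢ (dI R.2.1 R.2.2 \ crossedHeights 𝓡 R)

section

variable {𝓡 : Set Rect2} {R R' : Rect2}

lemma uncrossedPart_subset_rect : uncrossedPart 𝓡 R ⊆ rect R :=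
  prod_mono_right sdiff_subset

lemma measurableSet_crossedHeights : MeasurableSet (crossedHeights 𝓡 R) :=
  .biUnion (to_countable _) fun R' _ ↦ measurableSet_dI R'.2.1 R'.2.2

lemma measurableSet_uncrossedPart : MeasurableSet (uncrossedPart 𝓡 R) :=
  (measurableSet_dI _ _).prod ((measurableSet_dI _ _).diff measurableSet_crossedHeights)

lemma fst_subset_of_mem_widerMeeting (h : R' ∈ widerMeeting 𝓡 R) :
    dI R.1.1 R.1.2 ⊆ dI R'.1.1 R'.1.2 :=
  dI_subset_dI_of_not_disjoint h.2.1.le fun hd ↦ h.2.2 (hd.set_prod_left _ _)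

lemma snd_subset_of_mem_widerMeeting (h𝓡 : IsAntichain (rect · ⊆ rect ·) 𝓡)
    (hR : R ∈ 𝓡) (h : R' ∈ widerMeeting 𝓡 R) : dI R'.2.1 R'.2.2 ⊆ dI R.2.1 R.2.2 := by
  rcases le_total R'.2.2 R.2.2 with hle | hle
  · exact dI_subset_dI_of_not_disjoint hle fun hd ↦ h.2.2 (hd.symm.set_prod_right _ _)
  · have hne : R ≠ R' := ne_of_apply_ne (·.1.2) h.2.1.ne
    exact absurd (rect_subset_rect_of_not_disjoint h.2.1.le hle h.2.2) (h𝓡 hR h.1 hne)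

lemma crossedHeights_subset (h𝓡 : IsAntichain (rect · ⊆ rect ·) 𝓡) (hR : R ∈ 𝓡) :
    crossedHeights 𝓡 R ⊆ dI R.2.1 R.2.2 :=
  iUnion₂_subset fun _ ↦ snd_subset_of_mem_widerMeeting h𝓡 hR

lemma exists_prod_crossedHeights_subset_sh (h : (widerMeeting 𝓡 R).Nonempty) :
    ∃ Q ∈ widerMeeting 𝓡 R, dI Q.1.1 Q.1.2 ×ˢ crossedHeights 𝓡 R ⊆ sh 𝓡 := by
  obtain ⟨_, ⟨Q, hQ, rfl⟩, hmin⟩ :=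
    Int.exists_least_of_bdd (P := (· ∈ (fun P : Rect2 ↦ P.1.2) '' widerMeeting 𝓡 R))
      ⟨R.1.2, fun _ ⟨_, hP, hk⟩ ↦ hk ▸ hP.2.1.le⟩ (h.image _)
  refine ⟨Q, hQ, ?_⟩
  rintro ⟨x, y⟩ ⟨hx, hy⟩
  obtain ⟨R', hR', hy⟩ := mem_iUnion₂.1 hy
  obtain ⟨z, hz⟩ := nonempty_dI R.1.1 R.1.2
  have narrowest : dI Q.1.1 Q.1.2 ⊆ dI R'.1.1 R'.1.2 :=
    dI_subset_dI_of_not_disjoint (hmin _ (mem_image_of_mem _ hR')) (not_disjoint_iff.2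
      ⟨z, fst_subset_of_mem_widerMeeting hQ hz, fst_subset_of_mem_widerMeeting hR' hz⟩)
  exact rect_subset_sh hR'.1 ⟨narrowest hx, hy⟩

lemma disjoint_uncrossedPart_of_le (h𝓡 : IsAntichain (rect · ⊆ rect ·) 𝓡)
    (hR : R ∈ 𝓡) (hR' : R' ∈ 𝓡) (hne : R ≠ R') (hle : R.1.2 ≤ R'.1.2) :
    Disjoint (uncrossedPart 𝓡 R) (uncrossedPart 𝓡 R') := by
  rw [disjoint_left]
  intro z hz hz'
  have meet : ¬ Disjoint (rect R) (rect R') :=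
    not_disjoint_iff.2 ⟨z, uncrossedPart_subset_rect hz, uncrossedPart_subset_rect hz'⟩
  rcases hle.lt_or_eq with hlt | heq
  · exact hz.2.2 (mem_biUnion (show R' ∈ widerMeeting 𝓡 R from ⟨hR', hlt, meet⟩) hz'.2.1)
  · rcases le_total R.2.2 R'.2.2 with hheight | hheight
    · exact h𝓡 hR hR' hne (rect_subset_rect_of_not_disjoint hle hheight meet)
    · exact h𝓡 hR' hR hne.symm
        (rect_subset_rect_of_not_disjoint heq.ge hheight fun hd ↦ meet hd.symm)

lemma pairwiseDisjoint_uncrossedPart (h𝓡 : IsAntichain (rect · ⊆ rect ·) 𝓡) :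
    𝓡.PairwiseDisjoint (uncrossedPart 𝓡) := by
  intro R hR R' hR' hne
  rcases le_total R.1.2 R'.1.2 with hle | hle
  · exact disjoint_uncrossedPart_of_le h𝓡 hR hR' hne hle
  · exact (disjoint_uncrossedPart_of_le h𝓡 hR' hR hne.symm hle).symm

lemma volume_rect_le_four_mul_volume_uncrossedPart
    (h : 4 * volume (crossedHeights 𝓡 R) ≤ 3 * volume (dI R.2.1 R.2.2)) :
    volume (rect R) ≤ 4 * volume (uncrossedPart 𝓡 R) := by
  rw [volume_rect, uncrossedPart, Measure.volume_eq_prod, Measure.prod_prod, mul_left_comm]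
  gcongr
  exact measure_le_four_mul_measure_sdiff (by simp [volume_dI]) h

lemma four_mul_volume_crossedHeights_le {μ : ℝ} (h𝓡 : IsAntichain (rect · ⊆ rect ·) 𝓡)
    (hR : R ∈ 𝓡) (hsep : ∀ R' ∈ 𝓡, R.1.2 < R'.1.2 → 2 * μ * 2 ^ R.1.2 ≤ 2 ^ R'.1.2)
    (hdil : ¬ rectDil1 μ R ⊆ maxGT (1 / 2) (sh 𝓡)) :
    4 * volume (crossedHeights 𝓡 R) ≤ 3 * volume (dI R.2.1 R.2.2) := by
  by_contra! hlarge
  have crossed : (widerMeeting 𝓡 R).Nonempty := by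
    rw [nonempty_iff_ne_empty]
    intro hempty
    simp [crossedHeights, hempty] at hlarge
  obtain ⟨Q, hQ, hQsh⟩ := exists_prod_crossedHeights_subset_sh crossed
  exact hdil (rectDil1_subset_maxGT_half (hsep Q hQ.1 hQ.2.1) (fst_subset_of_mem_widerMeeting hQ)
    (crossedHeights_subset h𝓡 hR) hQsh hlarge)

/-! ### Families without large dilates in the superlevel set -/

lemma tsum_volume_rect_le_of_separated {μ : ℝ} (h𝓡 : IsAntichain (rect · ⊆ rect ·) 𝓡)
    (hsep : ∀ R ∈ 𝓡, ∀ R' ∈ 𝓡, R.1.2 < R'.1.2 → 2 * μ * 2 ^ R.1.2 ≤ 2 ^ R'.1.2)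
    (hdil : ∀ R ∈ 𝓡, ¬ rectDil1 μ R ⊆ maxGT (1 / 2) (sh 𝓡)) :
    ∑' R : 𝓡, volume (rect R) ≤ 4 * volume (sh 𝓡) :=
  calc ∑' R : 𝓡, volume (rect R)
      ≤ ∑' R : 𝓡, 4 * volume (uncrossedPart 𝓡 R) :=
        ENNReal.tsum_le_tsum fun ⟨R, hR⟩ ↦ volume_rect_le_four_mul_volume_uncrossedPart
          (four_mul_volume_crossedHeights_le h𝓡 hR (hsep R hR) (hdil R hR))
    _ = 4 * volume (⋃ R ∈ 𝓡, uncrossedPart 𝓡 R) := by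
        rw [ENNReal.tsum_mul_left, measure_biUnion (to_countable 𝓡)
          (pairwiseDisjoint_uncrossedPart h𝓡) fun _ _ ↦ measurableSet_uncrossedPart]
    _ ≤ 4 * volume (sh 𝓡) := by
        gcongr
        exact biUnion_mono subset_rfl fun _ _ ↦ uncrossedPart_subset_rect

lemma tsum_volume_rect_le {n : ℕ} (h𝓡 : IsAntichain (rect · ⊆ rect ·) 𝓡)
    (hdil : ∀ R ∈ 𝓡, ¬ rectDil1 (2 ^ n) R ⊆ maxGT (1 / 2) (sh 𝓡)) :
    ∑' R : 𝓡, volume (rect R) ≤ (n + 1) * (4 * volume (sh 𝓡)) := by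
  let widthClass (r : ZMod (n + 1)) : Set Rect2 := {R ∈ 𝓡 | (R.1.2 : ZMod (n + 1)) = r}
  have widthClass_subset (r) : widthClass r ⊆ 𝓡 := sep_subset _ _
  have separated (r) : ∀ R ∈ widthClass r, ∀ R' ∈ widthClass r, R.1.2 < R'.1.2 →
      (2 * 2 ^ n * 2 ^ R.1.2 : ℝ) ≤ 2 ^ R'.1.2 := by
    intro R hR R' hR' hlt
    have hdvd : ((n + 1 : ℕ) : ℤ) ∣ R'.1.2 - R.1.2 :=
      (ZMod.intCast_eq_intCast_iff_dvd_sub _ _ _).1 (hR.2.trans hR'.2.symm)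
    have hgap := Int.le_of_dvd (sub_pos.2 hlt) hdvd
    calc (2 * 2 ^ n * 2 ^ R.1.2 : ℝ) = 2 ^ (((n + 1 : ℕ) : ℤ) + R.1.2) := by
          rw [zpow_add₀ two_ne_zero, zpow_natCast, pow_succ']
      _ ≤ 2 ^ R'.1.2 := zpow_le_zpow_right₀ one_le_two (by linarith)
  have class_bound (r) : ∑' R : widthClass r, volume (rect R) ≤ 4 * volume (sh 𝓡) :=
    (tsum_volume_rect_le_of_separated (h𝓡.subset (widthClass_subset r)) (separated r)
      fun R hR hsub ↦ hdil R hR.1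
        (hsub.trans (maxGT_mono _ (sh_mono (widthClass_subset r))))).trans
      (by gcongr; exact sh_mono (widthClass_subset r))
  calc ∑' R : 𝓡, volume (rect R)
      ≤ ∑' R : ⋃ r, widthClass r, volume (rect R) :=
        ENNReal.tsum_mono_subtype (fun R ↦ volume (rect R))
          fun R hR ↦ mem_iUnion.2 ⟨_, hR, rfl⟩
    _ ≤ ∑ r, ∑' R : widthClass r, volume (rect R) :=
        ENNReal.tsum_iUnion_le (fun R ↦ volume (rect R)) widthClass
    _ ≤ ∑ _r : ZMod (n + 1), 4 * volume (sh 𝓡) := Finset.sum_le_sum fun r _ ↦ class_bound r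
    _ = (n + 1) * (4 * volume (sh 𝓡)) := by
        simp [ZMod.card]

end

/-! ### Summation over the levels of embeddedness -/

section

variable {𝓤 : Set Rect2} {R : Rect2}

lemma emb_nonneg (𝓤 : Set Rect2) (R : Rect2) : 0 ≤ emb 𝓤 R :=
  Real.sSup_nonneg fun _ hμ ↦ zero_le_one.trans hμ.1

/- The supremum defining `emb` takes the value `0` when it is over an unbounded set. -/
lemma bddAbove_of_emb_ne_zero (h : emb 𝓤 R ≠ 0) :
    BddAbove {μ : ℝ | 1 ≤ μ ∧ rectDil1 μ R ⊆ maxGT (1 / 2) (sh 𝓤)} :=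
  not_imp_comm.1 Real.sSup_of_not_bddAbove h

lemma one_le_emb (hR : R ∈ 𝓤) (h : emb 𝓤 R ≠ 0) : 1 ≤ emb 𝓤 R := by
  refine le_csSup (bddAbove_of_emb_ne_zero h) ⟨le_rfl, ?_⟩
  rw [rectDil1_one]
  exact rect_subset_maxGT (by simp) (rect_subset_sh hR)

lemma not_rectDil1_subset_of_emb_lt {μ : ℝ} (h : emb 𝓤 R ≠ 0) (hμ : 1 ≤ μ)
    (hlt : emb 𝓤 R < μ) : ¬ rectDil1 μ R ⊆ maxGT (1 / 2) (sh 𝓤) :=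
  fun hsub ↦ hlt.not_ge (le_csSup (bddAbove_of_emb_ne_zero h) ⟨hμ, hsub⟩)

/-- The rectangles of `𝓡` whose embeddedness in `𝓤` is of dyadic size `2 ^ n`. -/
def embLevel (𝓤 𝓡 : Set Rect2) (n : ℕ) : Set Rect2 :=
  {R ∈ 𝓡 | 2 ^ n ≤ emb 𝓤 R ∧ emb 𝓤 R < 2 ^ (n + 1)}

lemma subset_emb_eq_zero_union_iUnion_embLevel {𝓡 : Set Rect2} (h : 𝓡 ⊆ 𝓤) :
    𝓡 ⊆ {R | emb 𝓤 R = 0} ∪ ⋃ n, embLevel 𝓤 𝓡 n := by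
  intro R hR
  rw [mem_union, or_iff_not_imp_left]
  intro hne
  obtain ⟨n, hn⟩ := exists_nat_pow_near (one_le_emb (h hR) hne) one_lt_two
  exact mem_iUnion.2 ⟨n, hR, hn⟩

lemma tsum_volume_rect_embLevel_le {𝓡 : Set Rect2} (h : 𝓡 ⊆ 𝓤)
    (h𝓡 : IsAntichain (rect · ⊆ rect ·) 𝓡) (n : ℕ) :
    ∑' R : embLevel 𝓤 𝓡 n, volume (rect R) ≤ (n + 2) * (4 * volume (sh 𝓡)) := by
  have hlevel : embLevel 𝓤 𝓡 n ⊆ 𝓡 := sep_subset _ _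
  have hdil : ∀ R ∈ embLevel 𝓤 𝓡 n,
      ¬ rectDil1 (2 ^ (n + 1)) R ⊆ maxGT (1 / 2) (sh (embLevel 𝓤 𝓡 n)) := by
    intro R ⟨_, hle, hlt⟩ hsub
    have hne : emb 𝓤 R ≠ 0 := ((by positivity : (0 : ℝ) < 2 ^ n).trans_le hle).ne'
    exact not_rectDil1_subset_of_emb_lt hne (one_le_pow₀ one_le_two) hlt
      (hsub.trans (maxGT_mono _ (sh_mono (hlevel.trans h))))
  calc ∑' R : embLevel 𝓤 𝓡 n, volume (rect R)
      ≤ ((n + 1 : ℕ) + 1) * (4 * volume (sh (embLevel 𝓤 𝓡 n))) :=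
        tsum_volume_rect_le (h𝓡.subset hlevel) hdil
    _ = (n + 2) * (4 * volume (sh (embLevel 𝓤 𝓡 n))) := by
        push_cast
        ring
    _ ≤ (n + 2) * (4 * volume (sh 𝓡)) := by
        gcongr
        exact sh_mono hlevel

lemma tsum_emb_rpow_mul_volume_rect_embLevel_le {𝓡 : Set Rect2} (h : 𝓡 ⊆ 𝓤)
    (h𝓡 : IsAntichain (rect · ⊆ rect ·) 𝓡) {ε : ℝ} (hε : 0 ≤ ε) (n : ℕ) :
    ∑' R : embLevel 𝓤 𝓡 n, ENNReal.ofReal (emb 𝓤 R ^ (-ε)) * volume (rect R) ≤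
      ENNReal.ofReal ((4 * n + 8) * (2 ^ (-ε)) ^ n) * volume (sh 𝓡) := by
  have emb_rpow_le (R : embLevel 𝓤 𝓡 n) : emb 𝓤 R ^ (-ε) ≤ (2 ^ (-ε)) ^ n := by
    rw [Real.rpow_pow_comm zero_le_two]
    exact Real.rpow_le_rpow_of_nonpos (by positivity) R.2.2.1 (neg_nonpos.2 hε)
  calc ∑' R : embLevel 𝓤 𝓡 n, ENNReal.ofReal (emb 𝓤 R ^ (-ε)) * volume (rect R)
      ≤ ∑' R : embLevel 𝓤 𝓡 n, ENNReal.ofReal ((2 ^ (-ε)) ^ n) * volume (rect R) := by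
        gcongr with R
        exact emb_rpow_le R
    _ ≤ ENNReal.ofReal ((2 ^ (-ε)) ^ n) * ((n + 2) * (4 * volume (sh 𝓡))) := by
        rw [ENNReal.tsum_mul_left]
        gcongr
        exact tsum_volume_rect_embLevel_le h h𝓡 n
    _ = ENNReal.ofReal ((4 * n + 8) * (2 ^ (-ε)) ^ n) * volume (sh 𝓡) := by
        rw [ENNReal.ofReal_mul (by positivity), ENNReal.ofReal_add (by positivity) (by norm_num),
          ENNReal.ofReal_mul zero_le_four, ENNReal.ofReal_natCast, ENNReal.ofReal_ofNat,
          ENNReal.ofReal_ofNat]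
        ring

end

/- Where the supremum defining `emb` is infinite, the junk values `emb 𝓤 R = 0` and
`0 ^ (-ε) = 0` combine to the intended weight `∞ ^ (-ε) = 0`. -/
theorem stmt_9_general (ε : ℝ) (hε : 0 < ε) :
    ∃ C : ℝ, 0 < C ∧ ∀ 𝓤 : Set Rect2, ∀ 𝓤' ⊆ 𝓤, IsAntichain (rect · ⊆ rect ·) 𝓤' →
      ∑' R : 𝓤', ENNReal.ofReal (emb 𝓤 (R : Rect2) ^ (-ε)) * volume (rect (R : Rect2))
        ≤ ENNReal.ofReal C * volume (sh 𝓤') := by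
  have h2ε : (2 : ℝ) ^ (-ε) < 1 := Real.rpow_lt_one_of_one_lt_of_neg one_lt_two (neg_lt_zero.2 hε)
  have hsum := summable_linear_mul_geometric 4 8 (q := 2 ^ (-ε))
    (by rwa [abs_of_pos (by positivity)])
  refine ⟨_, hsum.tsum_pos (fun n ↦ by positivity) 0 (by norm_num), fun 𝓤 𝓤' hsub h𝓤' ↦ ?_⟩
  let weighted (R : Rect2) : ℝ≥0∞ := ENNReal.ofReal (emb 𝓤 R ^ (-ε)) * volume (rect R)
  have weighted_eq_zero (R : {R | emb 𝓤 R = 0}) : weighted R = 0 := by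
    simp [weighted, show emb 𝓤 R = 0 from R.2, Real.zero_rpow (neg_ne_zero.2 hε.ne')]
  calc ∑' R : 𝓤', weighted R
      ≤ ∑' R : ↥({R | emb 𝓤 R = 0} ∪ ⋃ n, embLevel 𝓤 𝓤' n), weighted R :=
        ENNReal.tsum_mono_subtype weighted (subset_emb_eq_zero_union_iUnion_embLevel hsub)
    _ ≤ (∑' R : {R | emb 𝓤 R = 0}, weighted R) + ∑' R : ⋃ n, embLevel 𝓤 𝓤' n, weighted R :=
        ENNReal.tsum_union_le _ _ _
    _ = ∑' R : ⋃ n, embLevel 𝓤 𝓤' n, weighted R := by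
        rw [tsum_congr weighted_eq_zero, tsum_zero, zero_add]
    _ ≤ ∑' n, ∑' R : embLevel 𝓤 𝓤' n, weighted R := ENNReal.tsum_iUnion_le_tsum _ _
    _ ≤ ∑' n : ℕ, ENNReal.ofReal ((4 * n + 8) * (2 ^ (-ε)) ^ n) * volume (sh 𝓤') :=
        ENNReal.tsum_le_tsum fun n ↦
          tsum_emb_rpow_mul_volume_rect_embLevel_le hsub h𝓤' hε.le n
    _ = ENNReal.ofReal (∑' n : ℕ, (4 * n + 8) * (2 ^ (-ε)) ^ n) * volume (sh 𝓤') := by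
        rw [ENNReal.tsum_mul_right, ENNReal.ofReal_tsum_of_nonneg (fun n ↦ by positivity) hsum]

/-- Journé's Lemma in the plane: for every `ε > 0` there is `C_ε` such that for
every collection `𝓤` of dyadic rectangles in the plane with shadow of finite measure and
every subcollection `𝓤' ⊆ 𝓤` of pairwise incomparable rectangles,
`∑_{R ∈ 𝓤'} emb(R;𝓤)^{-ε} |R| ≤ C_ε |sh 𝓤'|`. -/
theorem stmt_9 (ε : ℝ) (hε : 0 < ε) :
    ∃ C : ℝ, 0 < C ∧ ∀ 𝓤 : Set Rect2, volume (sh 𝓤) < ⊤ →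
      ∀ 𝓤' ⊆ 𝓤, (∀ R ∈ 𝓤', ∀ R' ∈ 𝓤', R ≠ R' → ¬ rect R ⊆ rect R') →
      ∑' R : 𝓤', emb 𝓤 (R : Rect2) ^ (-ε) * (volume (rect (R : Rect2))).toReal
        ≤ C * (volume (sh 𝓤')).toReal := by
  obtain ⟨C, hC, hbound⟩ := stmt_9_general ε hε
  exact ⟨C, hC, fun 𝓤 hfin 𝓤' hsub hinc ↦ tsum_mul_toReal_le_of_tsum_ofReal_mul_le
    (fun R ↦ Real.rpow_nonneg (emb_nonneg 𝓤 R) _) (fun R ↦ volume_rect_ne_top R) hC.le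
    (measure_ne_top_of_subset (sh_mono hsub) hfin.ne) (hbound 𝓤 𝓤' hsub hinc)⟩
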